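/- arXiv:1506.02517 — 2 statements merged into one kernel-verified Lean document; each statement's English description precedes it below -/
import Mathlib

section
/- Let q ≥ 2 and n ≥ 1 be integers, let p be a real number with 1 ≤ p < ∞, let C ⊆ (ℤ/qℤ)^n be a code, and let r be a real number with 0 ≤ 2r < q. If every point of (ℤ/qℤ)^n lies within p-Lee distance r of exactly one codeword of C, then every point of ℤ^n lies within ℓ_p distance r of exactly one point of the Construction A lattice Λ(C) ⊆ ℤ^n; that is, Λ(C) is an r-perfect code in ℤ^n in the ℓ_p metric. -/
open Finset

/-- The `ℓ_p` distance on `ℤ^n` for a real parameter `p`. -/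
noncomputable def dp (n : ℕ) (p : ℝ) (x y : Fin n → ℤ) : ℝ :=
  (∑ i, (|x i - y i| : ℝ) ^ p) ^ (1 / p)

/-- The Lee distance on `ℤ/qℤ`. -/
def dLee {q : ℕ} (x y : ZMod q) : ℕ := min (x - y).val (y - x).val

/-- The `p`-Lee distance on `(ℤ/qℤ)^n`. -/
noncomputable def dpLee (n q : ℕ) (p : ℝ) (x y : Fin n → ZMod q) : ℝ :=
  (∑ i, (dLee (x i) (y i) : ℝ) ^ p) ^ (1 / p)

/-- The Construction A lattice of a code `C ⊆ (ℤ/qℤ)^n`: the preimage of `C` under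
coordinatewise reduction modulo `q`. -/
def constructionA (n q : ℕ) (C : Set (Fin n → ZMod q)) : Set (Fin n → ℤ) :=
  {x | (fun i => (x i : ZMod q)) ∈ C}

/-!
Reduction modulo `q` does not increase distances, and every residue vector lifts to an integer
vector realizing its `p`-Lee distance to a given centre: subtract from each coordinate of the centre
the representative of the difference with least absolute value. Since two points of an `ℓ_p` ball
of radius `r < q / 2` differ by less than `q` in every coordinate, reduction is a bijection from
that ball onto the Lee ball around the reduced centre, matching lattice points with codewords.
-/

theorem existsUnique_mem_preimage_iff_of_bijOn {α β : Type*} {f : α → β} {s : Set α} {t : Set β}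
    (hf : Set.BijOn f s t) (C : Set β) : (∃! x, x ∈ f ⁻¹' C ∧ x ∈ s) ↔ ∃! y, y ∈ C ∧ y ∈ t := by
  constructor
  · rintro ⟨x, ⟨hxC, hxs⟩, hx⟩
    refine ⟨f x, ⟨hxC, hf.mapsTo hxs⟩, ?_⟩
    rintro y ⟨hyC, hyt⟩
    obtain ⟨x', hx's, rfl⟩ := hf.surjOn hyt
    exact congrArg f (hx x' ⟨hyC, hx's⟩)
  · rintro ⟨y, ⟨hyC, hyt⟩, hy⟩
    obtain ⟨x, hxs, rfl⟩ := hf.surjOn hyt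
    refine ⟨x, ⟨hyC, hxs⟩, ?_⟩
    rintro x' ⟨hx'C, hx's⟩
    exact hf.injOn hx's hxs (hy (f x') ⟨hx'C, hf.mapsTo hx's⟩)

/-- The coordinatewise reduction map `φ : ℤ^n → (ℤ/qℤ)^n` of Construction A, reducible so that its
values are recognised as integer casts. -/
abbrev reduceMod (q : ℕ) {n : ℕ} (x : Fin n → ℤ) : Fin n → ZMod q := fun i => x i

theorem reduceMod_surjective (n q : ℕ) : Function.Surjective (reduceMod q (n := n)) :=
  ZMod.intCast_surjective.comp_left

section Lee

variable {q : ℕ}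

theorem dLee_eq_abs_valMinAbs (x y : ZMod q) : (dLee x y : ℤ) = |(x - y).valMinAbs| := by
  rw [Int.abs_eq_natAbs, Nat.cast_inj, dLee, ← neg_sub x y]
  rcases eq_zero_or_neZero q with rfl | _
  · exact (congrArg (min _) (Int.natAbs_neg _)).trans (min_self _)
  · rw [ZMod.valMinAbs_natAbs_eq_min, ZMod.neg_val]
    split_ifs with h
    · simp only [h, ZMod.val_zero, zero_le, min_eq_left]
    · rfl

theorem abs_valMinAbs_intCast_le (a : ℤ) : |(a : ZMod q).valMinAbs| ≤ |a| := by
  rcases eq_zero_or_neZero q with rfl | _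
  · exact le_rfl
  · rw [Int.abs_eq_natAbs, Int.abs_eq_natAbs, Nat.cast_le]
    exact ZMod.natAbs_min_of_le_div_two q _ a (ZMod.coe_valMinAbs _) (ZMod.natAbs_valMinAbs_le _)

theorem dLee_intCast_le_abs_sub (a b : ℤ) : (dLee (a : ZMod q) b : ℤ) ≤ |a - b| := by
  rw [dLee_eq_abs_valMinAbs, ← Int.cast_sub]
  exact abs_valMinAbs_intCast_le (a - b)

theorem exists_intCast_eq_and_abs_sub_eq_dLee (a : ℤ) (c : ZMod q) :
    ∃ b : ℤ, (b : ZMod q) = c ∧ |a - b| = dLee (a : ZMod q) c := by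
  refine ⟨a - (a - c : ZMod q).valMinAbs, ?_, ?_⟩
  · rw [Int.cast_sub, ZMod.coe_valMinAbs, sub_sub_cancel]
  · rw [sub_sub_cancel, dLee_eq_abs_valMinAbs]

end Lee

section Balls

variable {n q : ℕ} {p r : ℝ}

theorem dpLee_reduceMod_le_dp (hp : 0 ≤ p) (x y : Fin n → ℤ) :
    dpLee n q p (reduceMod q x) (reduceMod q y) ≤ dp n p x y := by
  unfold dpLee dp
  gcongr with i
  exact_mod_cast dLee_intCast_le_abs_sub (x i) (y i)

theorem exists_reduceMod_eq_and_dp_eq_dpLee (p : ℝ) (x : Fin n → ℤ) (c : Fin n → ZMod q) :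
    ∃ y, reduceMod q y = c ∧ dp n p x y = dpLee n q p (reduceMod q x) c := by
  choose y hyc hxy using fun i => exists_intCast_eq_and_abs_sub_eq_dLee (x i) (c i)
  have hxy_real (i : Fin n) : |(x i - y i : ℝ)| = dLee (x i : ZMod q) (c i) := by
    exact_mod_cast hxy i
  exact ⟨y, funext hyc, by simp only [dp, dpLee, hxy_real]⟩

theorem abs_sub_le_dp (hp : 0 < p) (x y : Fin n → ℤ) (i : Fin n) :
    |(x i - y i : ℝ)| ≤ dp n p x y := by
  rw [dp, one_div, Real.le_rpow_inv_iff_of_pos (abs_nonneg _) (by positivity) hp]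
  exact single_le_sum (f := fun j => |(x j - y j : ℝ)| ^ p) (fun j _ => by positivity) (mem_univ i)

theorem injOn_reduceMod_dp_ball (hp : 0 < p) (hrq : 2 * r < q) (z : Fin n → ℤ) :
    Set.InjOn (reduceMod q) {x | dp n p z x ≤ r} := by
  intro x hx y hy hxy
  funext i
  have hdvd : (q : ℤ) ∣ x i - y i :=
    (ZMod.intCast_eq_intCast_iff_dvd_sub _ _ _).1 (congrFun hxy i).symm
  have hlt : |(x i - y i : ℝ)| < q :=
    calc |(x i - y i : ℝ)| ≤ |(x i - z i : ℝ)| + |(z i - y i : ℝ)| := abs_sub_le _ _ _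
      _ = |(z i - x i : ℝ)| + |(z i - y i : ℝ)| := by rw [abs_sub_comm]
      _ ≤ r + r :=
        add_le_add ((abs_sub_le_dp hp z x i).trans hx) ((abs_sub_le_dp hp z y i).trans hy)
      _ < q := by rwa [← two_mul]
  exact sub_eq_zero.1 (Int.eq_zero_of_abs_lt_dvd hdvd (by exact_mod_cast hlt))

theorem bijOn_reduceMod_dp_ball (hp : 0 < p) (hrq : 2 * r < q) (z : Fin n → ℤ) :
    Set.BijOn (reduceMod q) {x | dp n p z x ≤ r} {c | dpLee n q p (reduceMod q z) c ≤ r} := by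
  refine ⟨fun x hx => (dpLee_reduceMod_le_dp hp.le z x).trans hx,
    injOn_reduceMod_dp_ball hp hrq z, fun c hc => ?_⟩
  obtain ⟨y, hyc, hzy⟩ := exists_reduceMod_eq_and_dp_eq_dpLee p z c
  exact ⟨y, hzy.trans_le hc, hyc⟩

end Balls

theorem constructionA_perfect_general {n q : ℕ} {p r : ℝ} (hp : 0 < p) (hrq : 2 * r < q)
    (C : Set (Fin n → ZMod q)) :
    (∀ z : Fin n → ℤ, ∃! c, c ∈ constructionA n q C ∧ dp n p z c ≤ r) ↔
      ∀ z : Fin n → ZMod q, ∃! c, c ∈ C ∧ dpLee n q p z c ≤ r := by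
  rw [(reduceMod_surjective n q).forall]
  exact forall_congr' fun z =>
    existsUnique_mem_preimage_iff_of_bijOn (bijOn_reduceMod_dp_ball hp hrq z) C

/-- If `0 ≤ 2r < q` and `C ⊆ (ℤ/qℤ)^n` is an `r`-perfect code in the `p`-Lee metric, then
the Construction A lattice `Λ(C) ⊆ ℤ^n` is an `r`-perfect code in the `ℓ_p` metric. -/
theorem constructionA_perfect (n q : ℕ) (hn : 1 ≤ n) (hq : 2 ≤ q) (p : ℝ) (hp : 1 ≤ p)
    (C : Set (Fin n → ZMod q)) (r : ℝ) (hr : 0 ≤ r) (hrq : 2 * r < q)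
    (hperf : ∀ z : Fin n → ZMod q, ∃! c, c ∈ C ∧ dpLee n q p z c ≤ r) :
    ∀ z : Fin n → ℤ, ∃! c, c ∈ constructionA n q C ∧ dp n p z c ≤ r :=
  (constructionA_perfect_general (by linarith) hrq C).2 hperf
end

section
/- Let n ≥ 1 and q ≥ 2 be integers. There exist an integer r ≥ 1 and a code C ⊆ (ℤ/qℤ)^n with at least two elements such that every point of (ℤ/qℤ)^n lies within ∞-Lee distance r of exactly one codeword of C (a non-trivial r-perfect code in the ℓ_∞ metric) if and only if q = b·m for some odd integer b > 1 and some integer m > 1. -/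
open Finset

/-- The `∞`-Lee distance on `(ℤ/qℤ)^n`. -/
def dInfLee {n q : ℕ} (x y : Fin n → ZMod q) : ℕ :=
  Finset.univ.sup fun i => dLee (x i) (y i)

/-!
When `2r + 1 ≤ q`, a ball of radius `r` in `(ℤ/qℤ)^n` is a product of `n` intervals of `2r + 1`
residues, so a perfect code satisfies `|C| (2r + 1)^n = q^n`, whence `2r + 1 ∣ q`; otherwise a
single ball is the whole space and the code is trivial. Conversely, if `2r + 1 ∣ q`, then the
multiples of `2r + 1` form a perfect code in `ℤ/qℤ`, because `[-r, r]` represents every residue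
modulo `2r + 1` exactly once, and powers of a perfect code are perfect for the maximum distance.
-/

/-- `C` is an `r`-perfect code for the distance `d`: every point lies in exactly one of the
closed `d`-balls of radius `r` centred at the points of `C`. No metric axiom is imposed on `d`. -/
def IsPerfectCode {α β : Type*} [LE β] (d : α → α → β) (r : β) (C : Set α) : Prop :=
  ∀ z, ∃! c, c ∈ C ∧ d z c ≤ r

namespace IsPerfectCode

theorem subsingleton {α β : Type*} [LE β] {d : α → α → β} {r : β} {C : Set α}
    (hC : IsPerfectCode d r C) (hd : ∀ x y, d x y ≤ r) : C.Subsingleton :=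
  fun x hx y hy => (hC x).unique ⟨hx, hd x x⟩ ⟨hy, hd x y⟩

theorem ncard_mul_card_ball {α β : Type*} [Fintype α] [LE β] [DecidableLE β] {d : α → α → β}
    {r : β} {C : Set α} {k : ℕ} (hC : IsPerfectCode d r C)
    (hball : ∀ c ∈ C, #{z | d z c ≤ r} = k) : C.ncard * k = Fintype.card α := by
  classical
  have hcover (z : α) : #(C.toFinset.bipartiteAbove (d · · ≤ r) z) = 1 := by
    rw [bipartiteAbove, ← (Fintype.existsUnique_iff_card_one _).1 (hC z)]
    congr 1
    ext c
    simp
  rw [Set.ncard_eq_toFinset_card', ← card_mul_eq_card_mul (s := univ) (d · · ≤ r)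
    (fun z _ => hcover z) fun c hc => hball c (Set.mem_toFinset.1 hc), card_univ, mul_one]

theorem pi {ι β : Type*} [Fintype ι] [SemilatticeSup β] [OrderBot β] {α : ι → Type*}
    {d : ∀ i, α i → α i → β} {r : β} {C : ∀ i, Set (α i)}
    (hC : ∀ i, IsPerfectCode (d i) r (C i)) :
    IsPerfectCode (fun x y => univ.sup fun i => d i (x i) (y i)) r (Set.univ.pi C) := by
  intro z
  simp only [Set.mem_univ_pi, Finset.sup_le_iff, mem_univ, true_imp_iff, ← forall_and]
  choose c hc hunique using fun i => hC i (z i)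
  exact ⟨c, hc, fun c' hc' => funext fun i => hunique i _ (hc' i)⟩

end IsPerfectCode

section Lee

variable {q : ℕ}

theorem dLee_eq_natAbs_valMinAbs (x y : ZMod q) : dLee x y = (x - y).valMinAbs.natAbs := by
  rw [dLee, ← neg_sub x y]
  generalize x - y = w
  obtain rfl | _ := eq_zero_or_neZero q
  · exact (congrArg (min w.natAbs) (Int.natAbs_neg w)).trans (min_self _)
  · rw [ZMod.valMinAbs_natAbs_eq_min, ZMod.neg_val]
    split_ifs with hw
    · simp [hw]
    · rfl

theorem dLee_le_half [NeZero q] (x y : ZMod q) : dLee x y ≤ q / 2 :=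
  dLee_eq_natAbs_valMinAbs x y ▸ ZMod.natAbs_valMinAbs_le _

theorem natAbs_valMinAbs_intCast_le (k : ℤ) : (k : ZMod q).valMinAbs.natAbs ≤ k.natAbs := by
  obtain rfl | _ := eq_zero_or_neZero q
  · rfl
  · exact ZMod.natAbs_min_of_le_div_two q _ _ (ZMod.coe_valMinAbs _) (ZMod.natAbs_valMinAbs_le _)

theorem dLee_le_iff_exists_intCast {r : ℕ} {x y : ZMod q} :
    dLee x y ≤ r ↔ ∃ k ∈ Icc (-r : ℤ) r, y + k = x := by
  rw [dLee_eq_natAbs_valMinAbs]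
  constructor
  · intro h
    exact ⟨(x - y).valMinAbs, by grind, by rw [ZMod.coe_valMinAbs, add_sub_cancel]⟩
  · rintro ⟨k, hk, rfl⟩
    rw [add_sub_cancel_left]
    exact (natAbs_valMinAbs_intCast_le k).trans (by grind)

theorem injOn_intCast_Icc {a b : ℤ} (hab : b - a < q) :
    Set.InjOn (Int.cast : ℤ → ZMod q) (Icc a b) := by
  intro j hj k hk hjk
  have hdvd : (q : ℤ) ∣ j - k := by
    rw [← ZMod.intCast_zmod_eq_zero_iff_dvd, Int.cast_sub, hjk, sub_self]
  refine sub_eq_zero.1 (Int.eq_zero_of_abs_lt_dvd hdvd ?_)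
  grind

theorem card_dLee_ball [NeZero q] {r : ℕ} (hr : 2 * r < q) (y : ZMod q) :
    #{x | dLee x y ≤ r} = 2 * r + 1 := by
  have hball : ({x | dLee x y ≤ r} : Finset (ZMod q)) =
      (Icc (-r : ℤ) r).image ((y + ·) ∘ Int.cast) := by
    ext x
    simp only [mem_filter_univ, dLee_le_iff_exists_intCast, mem_image, Function.comp_apply]
  have hinj : Set.InjOn (Int.cast : ℤ → ZMod q) (Icc (-r : ℤ) r) := injOn_intCast_Icc (by omega)
  rw [hball, card_image_of_injOn ((add_right_injective y).comp_injOn hinj), Int.card_Icc]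
  omega

theorem isPerfectCode_ker_castHom {r : ℕ} (h : 2 * r + 1 ∣ q) :
    IsPerfectCode dLee r (RingHom.ker (ZMod.castHom h (ZMod (2 * r + 1))) : Set (ZMod q)) := by
  intro z
  set φ := ZMod.castHom h (ZMod (2 * r + 1))
  set k := (φ z).valMinAbs
  have hkz : (k : ZMod (2 * r + 1)) = φ z := ZMod.coe_valMinAbs _
  have hk : k ∈ Icc (-r : ℤ) r := by
    have := ZMod.natAbs_valMinAbs_le (φ z)
    grind
  refine ⟨z - k, ⟨?_, dLee_le_iff_exists_intCast.2 ⟨k, hk, sub_add_cancel z _⟩⟩, ?_⟩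
  · rw [SetLike.mem_coe, RingHom.mem_ker, map_sub, map_intCast, hkz, sub_self]
  · rintro c ⟨hc, hzc⟩
    obtain ⟨j, hj, rfl⟩ := dLee_le_iff_exists_intCast.1 hzc
    have hjk : j = k := by
      refine injOn_intCast_Icc (q := 2 * r + 1) (by omega) hj hk ?_
      rw [hkz, map_add, RingHom.mem_ker.1 hc, zero_add, map_intCast]
    rw [← hjk, add_sub_cancel_right]

theorem nontrivial_ker_castHom {b : ℕ} (h : b ∣ q) (hlt : b < q) :
    (RingHom.ker (ZMod.castHom h (ZMod b)) : Set (ZMod q)).Nontrivial := by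
  have hb : (b : ZMod q) ∈ RingHom.ker (ZMod.castHom h (ZMod b)) := by
    rw [RingHom.mem_ker, map_natCast, ZMod.natCast_self]
  refine ⟨0, zero_mem _, b, hb, fun h0 => ?_⟩
  exact Nat.not_dvd_of_pos_of_lt (Nat.pos_of_dvd_of_pos h (by omega)) hlt
    ((ZMod.natCast_eq_zero_iff b q).1 h0.symm)

end Lee

section InfLee

variable {n q r : ℕ}

theorem dInfLee_le_iff {x y : Fin n → ZMod q} : dInfLee x y ≤ r ↔ ∀ i, dLee (x i) (y i) ≤ r := by
  simp only [dInfLee, Finset.sup_le_iff, mem_univ, true_imp_iff]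

theorem card_dInfLee_ball [NeZero q] (hr : 2 * r < q) (y : Fin n → ZMod q) :
    #{x | dInfLee x y ≤ r} = (2 * r + 1) ^ n := by
  have hball : ({x | dInfLee x y ≤ r} : Finset (Fin n → ZMod q)) =
      Fintype.piFinset fun i => {a | dLee a (y i) ≤ r} := by
    ext x
    simp only [mem_filter_univ, dInfLee_le_iff, Fintype.mem_piFinset]
  simp only [hball, Fintype.card_piFinset, card_dLee_ball hr, prod_const, card_univ,
    Fintype.card_fin]

theorem IsPerfectCode.ncard_mul_pow_eq_pow [NeZero q] {C : Set (Fin n → ZMod q)}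
    (hC : IsPerfectCode dInfLee r C) (hr : 2 * r < q) : C.ncard * (2 * r + 1) ^ n = q ^ n := by
  rw [hC.ncard_mul_card_ball fun c _ => card_dInfLee_ball hr c, Fintype.card_pi_const, ZMod.card]

theorem IsPerfectCode.two_mul_add_one_lt_of_nontrivial [NeZero q] {C : Set (Fin n → ZMod q)}
    (hC : IsPerfectCode dInfLee r C) (hnontrivial : C.Nontrivial) : 2 * r + 1 < q := by
  by_contra! hq
  refine hnontrivial.not_subsingleton (hC.subsingleton fun x y => dInfLee_le_iff.2 fun i => ?_)
  exact (dLee_le_half _ _).trans (by omega)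

theorem exists_nontrivial_isPerfectCode_dInfLee_iff [NeZero n] [NeZero q] :
    (∃ C : Set (Fin n → ZMod q), C.Nontrivial ∧ IsPerfectCode dInfLee r C) ↔
      2 * r + 1 ∣ q ∧ 2 * r + 1 < q := by
  constructor
  · rintro ⟨C, hnontrivial, hC⟩
    have hlt := hC.two_mul_add_one_lt_of_nontrivial hnontrivial
    exact ⟨(Nat.pow_dvd_pow_iff (NeZero.ne n)).1
      (Dvd.intro_left _ (hC.ncard_mul_pow_eq_pow (by omega))), hlt⟩
  · rintro ⟨hdvd, hlt⟩
    refine ⟨Set.univ.pi fun _ => RingHom.ker (ZMod.castHom hdvd (ZMod (2 * r + 1))), ?_,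
      .pi fun _ => isPerfectCode_ker_castHom hdvd⟩
    refine ((nontrivial_ker_castHom hdvd hlt).image (Function.const_injective (α := Fin n))).mono ?_
    rintro _ ⟨a, ha, rfl⟩ i -
    exact ha

end InfLee

/-- There exists a non-trivial `r`-perfect code in `(ℤ/qℤ)^n` in the `ℓ_∞` metric iff
`q = b·m` with `b > 1` odd and `m > 1`. -/
theorem exists_nontrivial_perfect_linf_iff (n q : ℕ) (hn : 1 ≤ n) (hq : 2 ≤ q) :
    (∃ (r : ℕ) (C : Set (Fin n → ZMod q)), 1 ≤ r ∧ C.Nontrivial ∧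
        ∀ z : Fin n → ZMod q, ∃! c, c ∈ C ∧ dInfLee z c ≤ r) ↔
    ∃ b m : ℕ, Odd b ∧ 1 < b ∧ 1 < m ∧ q = b * m := by
  have : NeZero n := ⟨by omega⟩
  have : NeZero q := ⟨by omega⟩
  constructor
  · rintro ⟨r, C, hr, hnontrivial, hC⟩
    obtain ⟨⟨m, rfl⟩, hlt⟩ := exists_nontrivial_isPerfectCode_dInfLee_iff.1 ⟨C, hnontrivial, hC⟩
    exact ⟨2 * r + 1, m, odd_two_mul_add_one r, by omega,
      (lt_mul_iff_one_lt_right (by omega)).1 hlt, rfl⟩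
  · rintro ⟨_, m, ⟨r, rfl⟩, hb, hm, rfl⟩
    obtain ⟨C, hnontrivial, hC⟩ := (exists_nontrivial_isPerfectCode_dInfLee_iff (n := n) (r := r)).2
      ⟨dvd_mul_right _ m, lt_mul_of_one_lt_right (by omega) hm⟩
    exact ⟨r, C, by omega, hnontrivial, hC⟩
end
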